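/- Let F > 0 and define ψ : (0,∞) → ℝ by ψ(t) = (A·t^{p−q} − F·t^{γ−q})/B. Then ψ attains a strict global maximum on (0,∞) at the unique point T(A,F), and ψ(T(A,F)) = Λ(A,B,F); moreover, for every λ > 0 and t > 0 one has φ_λ'(t) = 0 if and only if ψ(t) = λ. -/

import Mathlib

/-!
Write `a = p - q < b = γ - q` and `T = T(A,F)`. The defining property of `T` is the balance
`b F T^b = a A T^a`. Substituting `t = s T`, the difference `B (ψ(T) - ψ(t))` becomes a positive
multiple of `(b - a) - (b s^a - a s^b)`, which is positive for `s ≠ 1` by the strict Bernoulli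
inequality `u^r > 1 + r (u - 1)` with `u = s^a` and `r = b / a > 1`. The value `ψ(T)` follows
from the same balance, and the last claim from `φ_λ'(t) = B t^(q-1) (ψ(t) - λ)`.
-/

open Real Filter Topology Set

/-- The fiber map `φ_λ(t) = (A/p) t^p − (λB/q) t^q − (F/γ) t^γ`. -/
noncomputable def phi (p q γ A B F lam : ℝ) : ℝ → ℝ :=
  fun t => A / p * t ^ p - lam * B / q * t ^ q - F / γ * t ^ γ

/-- The extremal value `Λ(A,B,F)`. -/
noncomputable def Lam (p q γ A B F : ℝ) : ℝ :=
  (γ - p) / (γ - q) * ((p - q) / (γ - q)) ^ ((p - q) / (γ - p)) *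
    A ^ ((γ - q) / (γ - p)) / (B * F ^ ((p - q) / (γ - p)))

/-- The degenerate critical point `T(A,F)`. -/
noncomputable def Tcrit (p q γ A F : ℝ) : ℝ :=
  ((p - q) * A / ((γ - q) * F)) ^ (1 / (γ - p))

/-- The auxiliary map `ψ(t) = (A t^{p−q} − F t^{γ−q})/B`. -/
noncomputable def psi (p q γ A B F : ℝ) : ℝ → ℝ :=
  fun t => (A * t ^ (p - q) - F * t ^ (γ - q)) / B

/-- Strict Bernoulli inequality in homogeneous form, obtained with `u = s ^ a`, `r = b / a`. -/
lemma bernoulli_two_powers {a b s : ℝ} (ha : 0 < a) (hab : a < b) (hs : 0 < s) (hs1 : s ≠ 1) :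
    b * s ^ a - a * s ^ b < b - a := by
  have hu : 0 < s ^ a := rpow_pos_of_pos hs a
  have hu1 : s ^ a - 1 ≠ 0 := by
    intro h
    refine hs1 ((rpow_left_inj hs.le zero_le_one ha.ne').1 ?_)
    rw [one_rpow]
    exact sub_eq_zero.1 h
  have h := one_add_mul_self_lt_rpow_one_add (s := s ^ a - 1) (by linarith) hu1
    (p := b / a) ((one_lt_div ha).2 hab)
  rw [add_sub_cancel, ← rpow_mul hs.le, mul_div_cancel₀ b ha.ne'] at h
  have h2 := mul_lt_mul_of_pos_left h ha
  have h3 : a * (1 + b / a * (s ^ a - 1)) = a + b * (s ^ a - 1) := by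
    field_simp
  linarith

lemma Tcrit_pos {p q γ A F : ℝ} (hqp : q < p) (hpγ : p < γ) (hA : 0 < A) (hF : 0 < F) :
    0 < Tcrit p q γ A F := by
  have h1 : 0 < p - q := by linarith
  have h2 : 0 < γ - q := by linarith
  unfold Tcrit
  positivity

/-- The balance `(γ - q) F T^(γ-q) = (p - q) A T^(p-q)`, i.e. `ψ'(T) = 0`. -/
lemma Tcrit_balance {p q γ A F : ℝ} (hqp : q < p) (hpγ : p < γ) (hA : 0 < A) (hF : 0 < F) :
    (γ - q) * F * Tcrit p q γ A F ^ (γ - q) = (p - q) * A * Tcrit p q γ A F ^ (p - q) := by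
  have h1 : 0 < p - q := by linarith
  have h2 : 0 < γ - q := by linarith
  have h3 : γ - p ≠ 0 := by linarith
  have hX : Tcrit p q γ A F ^ (γ - p) = (p - q) * A / ((γ - q) * F) := by
    unfold Tcrit
    rw [← rpow_mul (by positivity), one_div_mul_cancel h3, rpow_one]
  rw [show γ - q = (γ - p) + (p - q) by ring, rpow_add (Tcrit_pos hqp hpγ hA hF), hX]
  rw [show (γ - p) + (p - q) = γ - q by ring]
  field_simp

lemma psi_lt_psi_Tcrit {p q γ A B F t : ℝ} (hqp : q < p) (hpγ : p < γ) (hA : 0 < A)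
    (hB : 0 < B) (hF : 0 < F) (ht : 0 < t) (hne : t ≠ Tcrit p q γ A F) :
    psi p q γ A B F t < psi p q γ A B F (Tcrit p q γ A F) := by
  have hT := Tcrit_pos hqp hpγ hA hF
  have hbal := Tcrit_balance hqp hpγ hA hF
  set T := Tcrit p q γ A F
  have h1 : 0 < p - q := by linarith
  have h2 : 0 < γ - q := by linarith
  have hs : 0 < t / T := by positivity
  have hs1 : t / T ≠ 1 := fun h => hne ((div_eq_one_iff_eq hT.ne').1 h)
  have hbern := bernoulli_two_powers h1 (show p - q < γ - q by linarith) hs hs1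
  have ht' : t = t / T * T := by field_simp
  unfold psi
  apply div_lt_div_of_pos_right _ hB
  rw [ht', mul_rpow hs.le hT.le, mul_rpow hs.le hT.le]
  have hTa : 0 < T ^ (p - q) := rpow_pos_of_pos hT _
  have hm := mul_lt_mul_of_pos_left hbern (mul_pos hA hTa)
  refine lt_of_mul_lt_mul_left ?_ h2.le
  generalize (t / T) ^ (p - q) = x at *
  generalize (t / T) ^ (γ - q) = y at *
  linear_combination hm + (1 - y) * hbal

lemma psi_Tcrit {p q γ A B F : ℝ} (hqp : q < p) (hpγ : p < γ) (hA : 0 < A)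
    (hB : 0 < B) (hF : 0 < F) :
    psi p q γ A B F (Tcrit p q γ A F) = Lam p q γ A B F := by
  have hbal := Tcrit_balance hqp hpγ hA hF
  have h1 : 0 < p - q := by linarith
  have h2 : 0 < γ - q := by linarith
  have h3 : 0 < γ - p := by linarith
  have hTa : Tcrit p q γ A F ^ (p - q) = ((p - q) / (γ - q)) ^ ((p - q) / (γ - p)) *
      A ^ ((p - q) / (γ - p)) / F ^ ((p - q) / (γ - p)) := by
    unfold Tcrit
    rw [← rpow_mul (by positivity), one_div_mul_eq_div, ← mul_rpow (by positivity) hA.le,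
      ← div_rpow (by positivity) hF.le]
    congr 1
    field_simp
  have hAe : A ^ ((γ - q) / (γ - p)) = A ^ ((p - q) / (γ - p)) * A := by
    rw [← rpow_add_one hA.ne']
    congr 1
    field_simp
    ring
  have hTb : F * Tcrit p q γ A F ^ (γ - q) =
      (p - q) * A * Tcrit p q γ A F ^ (p - q) / (γ - q) := by
    rw [eq_div_iff h2.ne']
    linarith
  have hFc : 0 < F ^ ((p - q) / (γ - p)) := rpow_pos_of_pos hF _
  unfold psi Lam
  rw [hTb, hTa, hAe]
  generalize F ^ ((p - q) / (γ - p)) = x at *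
  generalize A ^ ((p - q) / (γ - p)) = y at *
  generalize ((p - q) / (γ - q)) ^ ((p - q) / (γ - p)) = z at *
  field_simp
  ring

lemma hasDerivAt_phi {p q γ A B F lam t : ℝ} (hq : 1 < q) (hqp : q < p) (hpγ : p < γ)
    (hB : 0 < B) (ht : 0 < t) :
    HasDerivAt (phi p q γ A B F lam) (B * t ^ (q - 1) * (psi p q γ A B F t - lam)) t := by
  have hp0 : p ≠ 0 := by linarith
  have hq0 : q ≠ 0 := by linarith
  have hγ0 : γ ≠ 0 := by linarith
  have h := (((hasDerivAt_rpow_const (p := p) (Or.inl ht.ne')).const_mul (A / p)).sub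
    ((hasDerivAt_rpow_const (p := q) (Or.inl ht.ne')).const_mul (lam * B / q))).sub
    ((hasDerivAt_rpow_const (p := γ) (Or.inl ht.ne')).const_mul (F / γ))
  refine HasDerivAt.congr_deriv h ?_
  unfold psi
  rw [show p - 1 = (q - 1) + (p - q) by ring, show γ - 1 = (q - 1) + (γ - q) by ring,
    rpow_add ht, rpow_add ht]
  generalize t ^ (p - q) = x
  generalize t ^ (γ - q) = y
  generalize t ^ (q - 1) = z
  field_simp
  ring

/-- `ψ` attains a strict global maximum on `(0,∞)` at the unique point
`T(A,F)`, `ψ(T(A,F)) = Λ(A,B,F)`, and for `λ, t > 0`, `φ_λ'(t) = 0 ↔ ψ(t) = λ`. -/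
theorem psi_max_and_critical_characterization (p q γ A B F : ℝ)
    (hq : 1 < q) (hqp : q < p) (hpγ : p < γ)
    (hA : 0 < A) (hB : 0 < B) (hF : 0 < F) :
    0 < Tcrit p q γ A F ∧
    (∀ t : ℝ, 0 < t → t ≠ Tcrit p q γ A F →
      psi p q γ A B F t < psi p q γ A B F (Tcrit p q γ A F)) ∧
    psi p q γ A B F (Tcrit p q γ A F) = Lam p q γ A B F ∧
    ∀ lam t : ℝ, 0 < lam → 0 < t →
      (deriv (phi p q γ A B F lam) t = 0 ↔ psi p q γ A B F t = lam) := by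
  refine ⟨Tcrit_pos hqp hpγ hA hF, fun t ht hne => psi_lt_psi_Tcrit hqp hpγ hA hB hF ht hne,
    psi_Tcrit hqp hpγ hA hB hF, fun lam t _ ht => ?_⟩
  rw [(hasDerivAt_phi hq hqp hpγ hB ht).deriv,
    mul_eq_zero_iff_left (mul_pos hB (rpow_pos_of_pos ht _)).ne', sub_eq_zero]
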